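/- Let A be an N×N row-stochastic matrix, α ∈ (1/2, 1), and x(0) ∈ [−1,1]^N with x_i(0) ≠ 0 for every i. Define the recommender dynamics x(t+1) = (1−α)·A·x(t) + α·σ(x(t)), where σ(x) is the vector of componentwise signs sign(x_i) ∈ {−1,+1}. Then for all t and all i: x_i(t) ∈ [−1,1] and sign(x_i(t)) = sign(x_i(0)); moreover x(t) converges as t → ∞ to x* = α·(I − (1−α)A)^{-1}·σ(x(0)). -/

import Mathlib

open Filter

/-- The sign function: `+1` for positive reals, `-1` otherwise (only applied to
nonzero values here). -/
noncomputable def sgn (y : ℝ) : ℝ := if 0 < y then 1 else -1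

/-!
In the sup norm the dynamics averages `A x(t)`, of norm at most `1`, with a sign vector, so the
unit ball is invariant; since `α > 1/2`, the sign vector outweighs `A x(t)` in every coordinate, so
no sign ever changes. Hence `x(t + 1) = M x(t) + b` with the constant vector `b = α σ(x(0))` and
`M = (1 - α) A`. As `‖M‖ < 1`, the Neumann series makes `1 - M` invertible, and the deviation of
`x(t)` from the fixed point `(1 - M)⁻¹ b` is `M ^ t` applied to the initial one, which tends to `0`.
-/

open scoped Topology Matrix

section Sign

lemma abs_sgn (y : ℝ) : |sgn y| = 1 := by
  unfold sgn
  split_ifs <;> simp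

lemma sgn_sgn (y : ℝ) : sgn (sgn y) = sgn y := by
  by_cases hy : 0 < y <;> simp [sgn, hy]

lemma sgn_mul_of_pos {c : ℝ} (hc : 0 < c) (y : ℝ) : sgn (c * y) = sgn y := by
  simp only [sgn, mul_pos_iff_of_pos_left hc]

lemma sgn_add_of_abs_lt {z y : ℝ} (h : |z| < |y|) : sgn (z + y) = sgn y := by
  obtain ⟨hlower, hupper⟩ := abs_lt.mp h
  rcases lt_or_ge 0 y with hy | hy
  · rw [abs_of_pos hy] at hlower
    rw [sgn, sgn, if_pos hy, if_pos (by linarith)]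
  · rw [abs_of_nonpos hy] at hupper
    rw [sgn, sgn, if_neg hy.not_gt, if_neg (by linarith)]

end Sign

section SupNorm

-- Matrices carry the operator norm induced by the sup norm: the largest absolute row sum.
open scoped Matrix.Norms.Operator

section OperatorNorm

variable {m n R : Type*} [Fintype m] [Fintype n]

lemma pi_norm_le_one_iff_forall_mem_Icc {v : n → ℝ} :
    ‖v‖ ≤ 1 ↔ ∀ i, v i ∈ Set.Icc (-1 : ℝ) 1 := by
  simp only [pi_norm_le_iff_of_nonneg zero_le_one, Real.norm_eq_abs, abs_le, Set.mem_Icc]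

lemma linfty_opNorm_le_iff [SeminormedAddCommGroup R] {A : Matrix m n R} {r : ℝ} (hr : 0 ≤ r) :
    ‖A‖ ≤ r ↔ ∀ i, ∑ j, ‖A i j‖ ≤ r := by
  lift r to NNReal using hr
  rw [Matrix.linfty_opNorm_def, NNReal.coe_le_coe, Finset.sup_le_iff]
  simp only [Finset.mem_univ, true_imp_iff, ← coe_nnnorm, ← NNReal.coe_sum, NNReal.coe_le_coe]

lemma linfty_opNorm_le_one_of_row_stochastic {A : Matrix m n ℝ}
    (hA : (∀ i j, 0 ≤ A i j) ∧ ∀ i, ∑ j, A i j = 1) : ‖A‖ ≤ 1 := by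
  refine (linfty_opNorm_le_iff zero_le_one).mpr fun i ↦ le_of_eq ?_
  simp only [Real.norm_of_nonneg (hA.1 i _), hA.2 i]

lemma norm_mulVec_le_one [NonUnitalSeminormedRing R] {A : Matrix m n R} {v : n → R}
    (hA : ‖A‖ ≤ 1) (hv : ‖v‖ ≤ 1) : ‖A *ᵥ v‖ ≤ 1 :=
  (Matrix.linfty_opNorm_mulVec A v).trans (mul_le_one₀ hA (norm_nonneg v) hv)

end OperatorNorm

section AffineRecursion

variable {ι R : Type*} [Fintype ι] [DecidableEq ι]

lemma eq_pow_mulVec_add_of_affine_recursion [Ring R] {M : Matrix ι ι R} {b y : ι → R}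
    {x : ℕ → ι → R} (hy : M *ᵥ y + b = y) (hx : ∀ t, x (t + 1) = M *ᵥ x t + b) (t : ℕ) :
    x t = M ^ t *ᵥ (x 0 - y) + y := by
  induction t with
  | zero => simp
  | succ t ih =>
    calc x (t + 1) = M *ᵥ (M ^ t *ᵥ (x 0 - y) + y) + b := by rw [hx, ← ih]
      _ = M ^ (t + 1) *ᵥ (x 0 - y) + (M *ᵥ y + b) := by
        rw [Matrix.mulVec_add, Matrix.mulVec_mulVec, ← pow_succ', add_assoc]
      _ = M ^ (t + 1) *ᵥ (x 0 - y) + y := by rw [hy]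

lemma mulVec_inv_one_sub_mulVec_add_self [CommRing R] {M : Matrix ι ι R} (hM : IsUnit (1 - M))
    (b : ι → R) : M *ᵥ ((1 - M)⁻¹ *ᵥ b) + b = (1 - M)⁻¹ *ᵥ b := by
  have hsolve : (1 - M) *ᵥ ((1 - M)⁻¹ *ᵥ b) = b := by
    rw [Matrix.mulVec_mulVec, Matrix.mul_nonsing_inv _ ((Matrix.isUnit_iff_isUnit_det _).mp hM),
      Matrix.one_mulVec]
  rw [Matrix.sub_mulVec, Matrix.one_mulVec] at hsolve
  exact (sub_eq_iff_eq_add'.mp hsolve).symm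

lemma tendsto_inv_one_sub_mulVec_of_affine_recursion [NormedCommRing R] [CompleteSpace R]
    {M : Matrix ι ι R} (hM : ‖M‖ < 1) {b : ι → R} {x : ℕ → ι → R}
    (hx : ∀ t, x (t + 1) = M *ᵥ x t + b) :
    Tendsto x atTop (𝓝 ((1 - M)⁻¹ *ᵥ b)) := by
  set y := (1 - M)⁻¹ *ᵥ b
  -- The norm's uniform structure unfolds to the product one, but instance search does not see it.
  have hcomplete : @CompleteSpace (Matrix ι ι R) PseudoMetricSpace.toUniformSpace :=
    inferInstanceAs (CompleteSpace (ι → ι → R))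
  have hfixed : M *ᵥ y + b = y :=
    mulVec_inv_one_sub_mulVec_add_self (isUnit_one_sub_of_norm_lt_one hM) b
  have hpow : Tendsto (fun t ↦ M ^ t) atTop (𝓝 0) :=
    tendsto_pow_atTop_nhds_zero_of_norm_lt_one hM
  have hlim : Tendsto (fun t ↦ M ^ t *ᵥ (x 0 - y) + y) atTop (𝓝 (0 *ᵥ (x 0 - y) + y)) :=
    (((continuous_id.matrix_mulVec continuous_const).tendsto 0).comp hpow).add_const y
  rw [Matrix.zero_mulVec, zero_add] at hlim
  exact hlim.congr fun t ↦ (eq_pow_mulVec_add_of_affine_recursion hfixed hx t).symm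

end AffineRecursion

section Recommender

variable {ι : Type*} [Fintype ι] {A : Matrix ι ι ℝ} {α : ℝ} {v : ι → ℝ}

/-- One step `v ↦ (1 - α) A v + α σ(v)` of the recommender dynamics, where `σ` is the
componentwise `sgn`. -/
noncomputable def recommenderStep (A : Matrix ι ι ℝ) (α : ℝ) (v : ι → ℝ) : ι → ℝ :=
  (1 - α) • A *ᵥ v + α • fun i ↦ sgn (v i)

lemma norm_recommenderStep_le_one (hA : ‖A‖ ≤ 1) (hα₀ : 0 ≤ α) (hα₁ : α ≤ 1) (hv : ‖v‖ ≤ 1) :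
    ‖recommenderStep A α v‖ ≤ 1 := by
  have hsgn : ‖fun i ↦ sgn (v i)‖ ≤ 1 :=
    (pi_norm_le_iff_of_nonneg zero_le_one).mpr fun i ↦ (abs_sgn (v i)).le
  rw [← mem_closedBall_zero_iff] at hsgn ⊢
  exact convex_closedBall 0 1 (mem_closedBall_zero_iff.mpr (norm_mulVec_le_one hA hv)) hsgn
    (sub_nonneg.mpr hα₁) hα₀ (sub_add_cancel 1 α)

lemma sgn_recommenderStep (hA : ‖A‖ ≤ 1) (hα₀ : 1 / 2 < α) (hα₁ : α ≤ 1) (hv : ‖v‖ ≤ 1) (i : ι) :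
    sgn (recommenderStep A α v i) = sgn (v i) := by
  have hpos : 0 < α := by linarith
  have hdominated : |(1 - α) * (A *ᵥ v) i| < |α * sgn (v i)| :=
    calc |(1 - α) * (A *ᵥ v) i| = (1 - α) * |(A *ᵥ v) i| := by
          rw [abs_mul, abs_of_nonneg (sub_nonneg.mpr hα₁)]
      _ ≤ 1 - α := mul_le_of_le_one_right (sub_nonneg.mpr hα₁)
          ((norm_le_pi_norm (A *ᵥ v) i).trans (norm_mulVec_le_one hA hv))
      _ < α := by linarith
      _ = |α * sgn (v i)| := by rw [abs_mul, abs_sgn, abs_of_pos hpos, mul_one]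
  calc sgn (recommenderStep A α v i) = sgn (α * sgn (v i)) := sgn_add_of_abs_lt hdominated
    _ = sgn (v i) := by rw [sgn_mul_of_pos hpos, sgn_sgn]

lemma norm_le_one_and_sgn_eq_of_recommenderStep {x : ℕ → ι → ℝ} (hA : ‖A‖ ≤ 1)
    (hα₀ : 1 / 2 < α) (hα₁ : α ≤ 1) (hx₀ : ‖x 0‖ ≤ 1)
    (hx : ∀ t, x (t + 1) = recommenderStep A α (x t)) (t : ℕ) :
    ‖x t‖ ≤ 1 ∧ ∀ i, sgn (x t i) = sgn (x 0 i) := by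
  induction t with
  | zero => exact ⟨hx₀, fun _ ↦ rfl⟩
  | succ t ih =>
    obtain ⟨hnorm, hsgn⟩ := ih
    rw [hx]
    exact ⟨norm_recommenderStep_le_one hA (by linarith) hα₁ hnorm,
      fun i ↦ (sgn_recommenderStep hA hα₀ hα₁ hnorm i).trans (hsgn i)⟩

theorem stmt_14_general [DecidableEq ι] (hA : ‖A‖ ≤ 1) (hα : 1 / 2 < α ∧ α ≤ 1)
    {x : ℕ → ι → ℝ} (hx₀ : ∀ i, x 0 i ∈ Set.Icc (-1 : ℝ) 1 ∧ x 0 i ≠ 0)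
    (hx : ∀ t, x (t + 1) = recommenderStep A α (x t)) :
    (∀ t i, x t i ∈ Set.Icc (-1 : ℝ) 1 ∧ sgn (x t i) = sgn (x 0 i)) ∧
    Tendsto x atTop (𝓝 (α • (1 - (1 - α) • A)⁻¹ *ᵥ fun i ↦ sgn (x 0 i))) := by
  have hinvariant := norm_le_one_and_sgn_eq_of_recommenderStep hA hα.1 hα.2
    (pi_norm_le_one_iff_forall_mem_Icc.mpr fun i ↦ (hx₀ i).1) hx
  refine ⟨fun t i ↦ ⟨pi_norm_le_one_iff_forall_mem_Icc.mp (hinvariant t).1 i,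
    (hinvariant t).2 i⟩, ?_⟩
  have hcontraction : ‖(1 - α) • A‖ < 1 :=
    calc ‖(1 - α) • A‖ = (1 - α) * ‖A‖ := by
          rw [norm_smul, Real.norm_of_nonneg (sub_nonneg.mpr hα.2)]
      _ ≤ 1 - α := mul_le_of_le_one_right (sub_nonneg.mpr hα.2) hA
      _ < 1 := by linarith
  rw [← Matrix.mulVec_smul]
  refine tendsto_inv_one_sub_mulVec_of_affine_recursion hcontraction fun t ↦ ?_
  rw [hx, recommenderStep, Matrix.smul_mulVec, funext (hinvariant t).2]

end Recommender

end SupNorm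

/-- recommender dynamics `x(t+1) = (1-α)·A·x(t) + α·σ(x(t))` with
row-stochastic `A`, `α ∈ (1/2, 1)` and `x(0) ∈ [-1,1]^N` with nonzero entries: the
states stay in `[-1,1]`, signs never change, and
`x(t) → x* = α·(I - (1-α)A)⁻¹·σ(x(0))`. -/
theorem stmt_14 (N : ℕ) (A : Matrix (Fin N) (Fin N) ℝ) (α : ℝ)
    (hA : (∀ i j, 0 ≤ A i j) ∧ ∀ i, ∑ j, A i j = 1)
    (hα : 1 / 2 < α ∧ α < 1)
    (x : ℕ → Fin N → ℝ)
    (hx0 : ∀ i, x 0 i ∈ Set.Icc (-1 : ℝ) 1 ∧ x 0 i ≠ 0)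
    (hdyn : ∀ t, x (t + 1) =
      (1 - α) • A.mulVec (x t) + α • fun i => sgn (x t i)) :
    (∀ t i, x t i ∈ Set.Icc (-1 : ℝ) 1 ∧ sgn (x t i) = sgn (x 0 i)) ∧
    Tendsto x atTop
      (nhds (α • (1 - (1 - α) • A)⁻¹.mulVec fun i => sgn (x 0 i))) :=
  stmt_14_general (linfty_opNorm_le_one_of_row_stochastic hA) ⟨hα.1, hα.2.le⟩ hx0 hdyn
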